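/- Let G be a class of functions from ℝ^d to ℝ and let D_n = ((x_i, y_i))_{i=1..n} be a finite data set with y_i ≠ 0 for all i. For p ≥ 1, define the empirical L_p norm ‖f₁ - f₂‖_{p,D_n} = ((1/n)·Σ_i |f₁(x_i,y_i) - f₂(x_i,y_i)|^p)^{1/p}. Then for every ε > 0, N(ε, H(G, l_MAPE), ‖·‖_{p,D_n}) ≤ N(ε·min_{1≤i≤n}|y_i|, H(G, l_MAE), ‖·‖_{p,D_n}). -/

import Mathlib

open ENNReal Set

/-- The `ε`-covering number of a class `F` with respect to a real-valued
dissimilarity `κ`: the size of the smallest finite subset `S ⊆ F` such that every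
element of `F` is at dissimilarity `< ε` of some element of `S` (`⊤` if no such
finite cover exists). -/
noncomputable def coveringNumber {α : Type*} (ε : ℝ) (F : Set α) (κ : α → α → ℝ) : ℕ∞ :=
  sInf {n : ℕ∞ | ∃ S : Finset α, (S.card : ℕ∞) = n ∧ ↑S ⊆ F ∧
    ∀ f ∈ F, ∃ f' ∈ S, κ f f' < ε}

/-- The empirical `L_p` dissimilarity on functions of the data, for a data set
`z : Fin n → (ℝ^d) × ℝ`. -/
noncomputable def empLpDist {d n : ℕ} (p : ℝ) (z : Fin n → (Fin d → ℝ) × ℝ)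
    (h₁ h₂ : (Fin d → ℝ) × ℝ → ℝ) : ℝ :=
  ((1 / (n : ℝ)) * ∑ i, |h₁ (z i) - h₂ (z i)| ^ p) ^ (1 / p)

lemma empLpDist_div_le {d n : ℕ} (p : ℝ) (hp : 1 ≤ p) (z : Fin n → (Fin d → ℝ) × ℝ)
    (m : ℝ) (hm : 0 < m) (hz : ∀ i, m ≤ |(z i).2|) (h₁ h₂ : (Fin d → ℝ) × ℝ → ℝ) :
    empLpDist p z (fun q => h₁ q / |q.2|) (fun q => h₂ q / |q.2|) ≤ empLpDist p z h₁ h₂ / m := by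
  have hp0 : 0 < p := by linarith
  have key : empLpDist p z h₁ h₂ / m
      = ((1 / (n : ℝ)) * ∑ i, (|h₁ (z i) - h₂ (z i)| / m) ^ p) ^ (1 / p) := by
    have h1 : ∀ i, (|h₁ (z i) - h₂ (z i)| / m) ^ p = |h₁ (z i) - h₂ (z i)| ^ p / m ^ p :=
      fun i => Real.div_rpow (abs_nonneg _) hm.le p
    simp only [h1]
    rw [← Finset.sum_div, ← mul_div_assoc, Real.div_rpow (by positivity) (by positivity),
      ← Real.rpow_mul hm.le, mul_one_div_cancel hp0.ne', Real.rpow_one]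
    rfl
  rw [key]
  unfold empLpDist
  refine Real.rpow_le_rpow (by positivity) ?_ (by positivity)
  refine mul_le_mul_of_nonneg_left (Finset.sum_le_sum fun i _ => ?_) (by positivity)
  refine Real.rpow_le_rpow (by positivity) ?_ hp0.le
  rw [← sub_div, abs_div, abs_abs]
  exact div_le_div_of_nonneg_left (abs_nonneg _) hm (hz i)

theorem covering_number_MAPE_le_MAE_Lp {d n : ℕ} (hn : 0 < n)
    (G : Set ((Fin d → ℝ) → ℝ)) (z : Fin n → (Fin d → ℝ) × ℝ)
    (hz : ∀ i, (z i).2 ≠ 0) (p : ℝ) (hp : 1 ≤ p) (ε : ℝ) (hε : 0 < ε) :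
    coveringNumber ε
      ((fun g : (Fin d → ℝ) → ℝ => fun q : (Fin d → ℝ) × ℝ => |g q.1 - q.2| / |q.2|) '' G)
      (empLpDist p z)
    ≤ coveringNumber (ε * ⨅ i, |(z i).2|)
      ((fun g : (Fin d → ℝ) → ℝ => fun q : (Fin d → ℝ) × ℝ => |g q.1 - q.2|) '' G)
      (empLpDist p z) := by
  classical
  haveI : Nonempty (Fin n) := ⟨⟨0, hn⟩⟩
  obtain ⟨i₀, hi₀⟩ := exists_eq_ciInf_of_finite (f := fun i => |(z i).2|)
  have hm : 0 < ⨅ i, |(z i).2| := by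
    rw [← hi₀]; exact abs_pos.mpr (hz i₀)
  have hle : ∀ i, (⨅ i, |(z i).2|) ≤ |(z i).2| := fun i => ciInf_le (Set.finite_range _).bddBelow i
  unfold coveringNumber
  refine le_sInf ?_
  rintro _ ⟨S, rfl, hS, hcov⟩
  let Φ : ((Fin d → ℝ) × ℝ → ℝ) → ((Fin d → ℝ) × ℝ → ℝ) := fun h q => h q / |q.2|
  refine le_trans (sInf_le ⟨S.image Φ, rfl, ?_, ?_⟩) (Nat.cast_le.mpr Finset.card_image_le)
  · intro f hf
    obtain ⟨h, hh, rfl⟩ := Finset.mem_image.mp (Finset.mem_coe.mp hf)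
    obtain ⟨g, hg, rfl⟩ := hS hh
    exact ⟨g, hg, rfl⟩
  · rintro _ ⟨g, hg, rfl⟩
    obtain ⟨h, hh, hlt⟩ := hcov _ ⟨g, hg, rfl⟩
    refine ⟨Φ h, Finset.mem_image_of_mem _ hh, ?_⟩
    exact lt_of_le_of_lt (empLpDist_div_le p hp z _ hm hle _ h) ((div_lt_iff₀ hm).mpr hlt)
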